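/- arXiv:math/0602446 — 2 statements merged into one kernel-verified Lean document; each statement's English description precedes it below -/
import Mathlib

section
/- Let p be an odd prime, n ≥ 3, and u = u_{n,p} = (p^{3n} − 1)/(p − 1). In K := SL_{3n}(F_p) let v := Id_{3n} + Σ_{i=1}^n E_{i,n+i} (the block elementary matrix with an n×n identity block in block position (1,2)) and let q be the diagonal matrix with all diagonal entries 1 except −1 in positions 2n+2 and 2n+3. Then there exist two group homomorphisms i′, i″ : K → Alt(u) such that i″(q)^{−1} i′(v) i″(q) = i′(v)^{−1}, i′(q)^{−1} i″(v) i′(q) = i″(v)^{−1}, and ⟨i′(K), i″(K)⟩ = Alt(u). -/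
open Matrix.SpecialLinearGroup in
theorem Matrix.SpecialLinearGroup.diag2n_eq_transvection_prod {ι F : Type*} [Fintype ι]
    [DecidableEq ι] [Field F] {i j : ι} (hij : i ≠ j) {c : F} (hc : c ≠ 0) :
    diag2n hij c hc = transvection hij (c * (1 - c)) * transvection hij.symm (-c⁻¹) *
      transvection hij (c - 1) * transvection hij.symm 1 := by
  have key : ∀ {k l : ι} (h : k ≠ l) (a : F) (x : ι → F) (m : ι),
      ((transvection h a).1.mulVec x) m = x m + if m = k then a * x l else 0 := by
    intro k l h a x m
    rw [transvection_coe, Matrix.add_mulVec, Matrix.one_mulVec, Pi.add_apply,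
      Matrix.single_mulVec]
    by_cases hm : m = k <;> simp [hm]
  refine Subtype.ext (Matrix.ext_of_mulVec_single fun l => ?_)
  simp only [coe_mul, ← Matrix.mulVec_mulVec]
  generalize (Pi.single l 1 : ι → F) = x
  ext m
  rw [diag2n_coe, Matrix.mulVec_diagonal]
  simp only [key]
  by_cases hmi : m = i
  · subst hmi
    simp only [if_true, if_neg hij, if_neg hij.symm]
    field_simp
    ring
  · by_cases hmj : m = j
    · subst hmj
      simp only [if_true, if_neg hij, if_neg hij.symm]
      field_simp
      ring
    · simp [hmi, hmj]

open Matrix.SpecialLinearGroup in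
theorem Matrix.SpecialLinearGroup.hom_intUnits_eq_one {ι F : Type*} [Fintype ι] [DecidableEq ι]
    [Nontrivial ι] [Field F] (h2 : (2 : F) ≠ 0)
    (f : Matrix.SpecialLinearGroup ι F →* ℤˣ) (g : Matrix.SpecialLinearGroup ι F) : f g = 1 := by
  have ht : ∀ (i j : ι) (hij : i ≠ j) (a : F), f (transvection hij a) = 1 := by
    intro i j hij a
    have : NeZero (2 : F) := ⟨h2⟩
    rw [← add_halves a, transvection_add, map_mul, Int.units_mul_self]
  refine diagonal_transvection_induction' (fun g => f g = 1) g (fun i j hij c hc => ?_) ht ?_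
  · simp [diag2n_eq_transvection_prod, ht]
  · intro A B hA hB
    rw [map_mul, hA, hB, one_mul]

/-- Linear data on a vector space `V` defining a non-linear involution. -/
structure SlopeData (F V I : Type*) [Field F] [AddCommGroup V] [Module F V] where
  N : V →ₗ[F] V
  Q : V →ₗ[F] V
  a : I → V →ₗ[F] F
  b : I → V →ₗ[F] F
  t : V →ₗ[F] F
  e : V
  a_N : ∀ i x, a i (N x) = b i x
  a_Q : ∀ i x, a i (Q x) = a i x
  a_e : ∀ i, a i e = 0
  b_N : ∀ i x, b i (N x) = 0
  b_Q : ∀ i x, b i (Q x) = b i x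
  b_e : ∀ i, b i e = 0
  t_N : ∀ x, t (N x) = 0
  t_Q : ∀ x, t (Q x) = -t x
  t_e : t e = 1
  N_N : ∀ x, N (N x) = 0
  N_Q : ∀ x, N (Q x) = N x
  N_e : N e = 0
  Q_N : ∀ x, Q (N x) = N x
  Q_Q : ∀ x, Q (Q x) = x
  Q_e : Q e = -e
  N_eq_zero : ∀ x, (∀ i, b i x = 0) → N x = 0

namespace SlopeData

variable {F V I : Type*} [Field F] [AddCommGroup V] [Module F V] [Nonempty I]
  (D : SlopeData F V I)

attribute [simp] a_N a_Q a_e b_N b_Q b_e t_N t_Q t_e N_N N_Q N_e Q_N Q_Q Q_e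

/-- An index at which the coordinates `b i x` do not vanish, if there is one. -/
noncomputable def pivot (x : V) : I := Classical.epsilon fun i => D.b i x ≠ 0

/-- The coefficient of the shear `D.twist` at `x`; it is zero where all the `D.b i` vanish. -/
noncomputable def slope (x : V) : F :=
  (D.t x - D.a (D.pivot x) x) / D.b (D.pivot x) x

/-- The homogeneous involution which exchanges the coordinates `D.a (D.pivot x)` and `D.t` by a shear
along `D.N x - D.b (D.pivot x) x • D.e`. -/
noncomputable def twist (x : V) : V :=
  x + D.slope x • (D.N x - D.b (D.pivot x) x • D.e)

theorem N_eq_zero_of_pivot {x : V} (h : D.b (D.pivot x) x = 0) : D.N x = 0 := by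
  refine D.N_eq_zero x fun i => ?_
  by_contra hi
  exact Classical.epsilon_spec (p := fun i => D.b i x ≠ 0) ⟨i, hi⟩ h

theorem pivot_congr {x y : V} (h : ∀ i, D.b i x = 0 ↔ D.b i y = 0) : D.pivot x = D.pivot y := by
  simp only [pivot, ne_eq, h]

theorem slope_eq_zero {x : V} (h : D.b (D.pivot x) x = 0) : D.slope x = 0 := by
  simp [slope, h]

theorem twist_eq_self {x : V} (h : D.b (D.pivot x) x = 0) : D.twist x = x := by
  simp [twist, D.slope_eq_zero h]

@[simp] theorem b_twist (i : I) (x : V) : D.b i (D.twist x) = D.b i x := by simp [twist]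

@[simp] theorem pivot_twist (x : V) : D.pivot (D.twist x) = D.pivot x :=
  D.pivot_congr (by simp)

@[simp] theorem pivot_Q (x : V) : D.pivot (D.Q x) = D.pivot x := D.pivot_congr (by simp)

@[simp] theorem N_twist (x : V) : D.N (D.twist x) = D.N x := by simp [twist]

theorem slope_mul {x : V} (h : D.b (D.pivot x) x ≠ 0) :
    D.slope x * D.b (D.pivot x) x = D.t x - D.a (D.pivot x) x := div_mul_cancel₀ _ h

theorem a_twist {x : V} (h : D.b (D.pivot x) x ≠ 0) : D.a (D.pivot x) (D.twist x) = D.t x := by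
  simp [twist, D.slope_mul h]

theorem t_twist {x : V} (h : D.b (D.pivot x) x ≠ 0) : D.t (D.twist x) = D.a (D.pivot x) x := by
  simp [twist, D.slope_mul h]

theorem twist_twist (x : V) : D.twist (D.twist x) = x := by
  by_cases h : D.b (D.pivot x) x = 0
  · simp [D.twist_eq_self h]
  · have hs : D.slope (D.twist x) = -D.slope x := by
      rw [slope, pivot_twist, D.a_twist h, D.t_twist h, b_twist, slope, ← neg_div, neg_sub]
    rw [twist, hs, N_twist, pivot_twist, b_twist]
    nth_rw 1 [twist]
    module

theorem twist_smul (c : F) (x : V) : D.twist (c • x) = c • D.twist x := by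
  by_cases hc : c = 0
  · subst hc
    simp [twist]
  · have hp : D.pivot (c • x) = D.pivot x := D.pivot_congr (by simp [hc])
    have hs : D.slope (c • x) = D.slope x := by
      simp only [slope, hp, map_smul, smul_eq_mul, ← mul_sub]
      exact mul_div_mul_left _ _ hc
    rw [twist, hs, hp, twist, map_smul, map_smul, smul_eq_mul]
    module

theorem twist_Q_twist {x : V} (h : D.b (D.pivot x) x ≠ 0) :
    D.twist (D.Q (D.twist x)) = D.Q x - (2 * D.a (D.pivot x) x / D.b (D.pivot x) x) • D.N x +
      (2 * D.t x) • D.e := by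
  have hs : D.slope (D.Q (D.twist x)) = (-D.a (D.pivot x) x - D.t x) / D.b (D.pivot x) x := by
    simp [slope, D.a_twist h, D.t_twist h]
  rw [twist, hs]
  simp only [pivot_Q, pivot_twist, b_Q, b_twist, N_Q, N_twist]
  rw [twist, slope]
  simp only [map_add, map_sub, map_smul, Q_N, Q_e]
  match_scalars <;> field_simp <;> ring

theorem pivot_add_N (x : V) : D.pivot (x + D.N x) = D.pivot x := D.pivot_congr (by simp)

theorem twist_Q_twist_inverts (x : V) :
    D.twist (D.Q (D.twist (D.twist (D.Q (D.twist (x + D.N x))) + D.N x))) = x := by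
  by_cases h : D.b (D.pivot x) x = 0
  · have hN := D.N_eq_zero_of_pivot h
    simp [hN, D.twist_eq_self h, D.twist_eq_self (x := D.Q x) (by simpa using h)]
  · have h' : D.b (D.pivot (x + D.N x)) (x + D.N x) ≠ 0 := by simpa [pivot_add_N] using h
    set z := D.twist (D.Q (D.twist (x + D.N x))) + D.N x with hz
    have hzp : D.pivot z = D.pivot x := D.pivot_congr (by simp [hz])
    have hzb : D.b (D.pivot z) z ≠ 0 := by
      rw [hzp]
      simpa [hz] using h
    rw [D.twist_Q_twist hzb, hzp]
    rw [D.twist_Q_twist h', pivot_add_N] at hz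
    rw [hz]
    simp only [map_add, map_sub, map_smul, Q_N, Q_e, Q_Q, N_N, N_Q, N_e, a_N, a_Q, a_e, b_N, b_Q,
      b_e, t_N, t_Q, t_e, smul_eq_mul, smul_zero, sub_zero, add_zero, mul_zero]
    match_scalars <;> field_simp <;> ring

theorem twist_commute (g : V →ₗ[F] V) (ha : ∀ i x, D.a i (g x) = D.a i x)
    (hb : ∀ i x, D.b i (g x) = D.b i x) (ht : ∀ x, D.t (g x) = D.t x)
    (hN : ∀ x, D.N (g x) = g (D.N x)) (he : g D.e = D.e) (x : V) :
    D.twist (g x) = g (D.twist x) := by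
  have hp : D.pivot (g x) = D.pivot x := D.pivot_congr (by simp [hb])
  simp [twist, slope, hp, ha, hb, ht, hN, he]

end SlopeData

open scoped LinearAlgebra.Projectivization

/-- The permutation of a projective space induced by a homogeneous involution. -/
noncomputable def Projectivization.permOfInvolutive {F V : Type*} [Field F] [AddCommGroup V]
    [Module F V] (f : V → V) (hf : Function.Involutive f) (hs : ∀ (c : F) x, f (c • x) = c • f x) :
    Equiv.Perm (ℙ F V) :=
  have h0 : f 0 = 0 := by simpa using hs 0 0
  have hne : ∀ {x}, x ≠ 0 → f x ≠ 0 := fun {x} hx h => hx (by rw [← hf x, h, h0])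
  Function.Involutive.toPerm
    (Quotient.map' (fun x => ⟨f x, hne x.2⟩) (by
      rintro ⟨x, hx⟩ ⟨y, hy⟩ ⟨c, hc⟩
      exact ⟨c, by simpa [Units.smul_def, hs] using congrArg f hc⟩))
    (by
      intro P
      induction P using Projectivization.ind with | h x hx =>
      exact congrArg (Projectivization.mk' F) (Subtype.ext (hf x)))

/-- If `s` and `τ` are involutions such that `τ` commutes with `v` and `q`, and `s * q * s`
inverts `v`, then `q` and the conjugate of `q` by `τ * s` invert the corresponding conjugates
of `v`. -/
theorem conj_inverts {G : Type*} [Group G] {s τ v q : G} (hs : s * s = 1) (hτ : τ * τ = 1)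
    (hv : Commute τ v) (hq : Commute τ q) (hqq : q * q = 1)
    (h : s * q * s * v * (s * q * s) * v = 1) :
    (τ * s * q * (τ * s)⁻¹)⁻¹ * v * (τ * s * q * (τ * s)⁻¹) = v⁻¹ ∧
      q⁻¹ * (τ * s * v * (τ * s)⁻¹) * q = (τ * s * v * (τ * s)⁻¹)⁻¹ := by
  have hs' : s⁻¹ = s := inv_eq_of_mul_eq_one_left hs
  have hτ' : τ⁻¹ = τ := inv_eq_of_mul_eq_one_left hτ
  have hq' : q⁻¹ = q := inv_eq_of_mul_eq_one_left hqq
  have hw : s * q * s * v * (s * q * s) = v⁻¹ := eq_inv_of_mul_eq_one_left h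
  constructor
  · calc _ = τ * (s * q * s) * (τ * v * τ) * (s * q * s) * τ := by
          simp only [mul_inv_rev, hs', hτ', hq', mul_assoc]
      _ = τ * (s * q * s * v * (s * q * s)) * τ := by
          rw [hv.eq, mul_assoc v, hτ]
          group
      _ = v⁻¹ := by rw [hw, hv.inv_right.eq, mul_assoc, hτ, mul_one]
  · calc _ = (q * τ) * s * v * s * (τ * q) := by
          simp only [mul_inv_rev, hs', hτ', hq', mul_assoc]
      _ = (τ * s) * (s * q * s * v * (s * q * s)) * (τ * s)⁻¹ := by
          rw [hq.eq]
          simp only [mul_inv_rev, hs', hτ', mul_assoc]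
          rw [← hq.eq]
          simp [← mul_assoc, hs]
          simp [mul_assoc, hq.eq]
      _ = _ := by
          rw [hw]
          group

theorem alternatingGroup_le_range_sup_range {G X : Type*} [Group G] [MulAction G X] [Fintype X]
    [DecidableEq X] [MulAction.IsPreprimitive G X] {s : Equiv.Perm X} {g : G} {a b : X}
    (hs : Commute s (MulAction.toPermHom G X g)) (hb : g • b = b) (ha : g • a ≠ a) :
    alternatingGroup X ≤ (MulAction.toPermHom G X).range ⊔
      ((MulAut.conj (Equiv.swap a b * s)).toMonoidHom.comp (MulAction.toPermHom G X)).range := by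
  set φ := MulAction.toPermHom G X
  set H := φ.range ⊔ ((MulAut.conj (Equiv.swap a b * s)).toMonoidHom.comp φ).range
  have hab : a ≠ b := by
    rintro rfl
    exact ha hb
  have hprim : MulAction.IsPreprimitive H X := by
    let ψ : G → H := fun x => ⟨φ x, Subgroup.mem_sup_left ⟨x, rfl⟩⟩
    let f : X →ₑ[ψ] X := { toFun := id, map_smul' := fun _ _ => rfl }
    exact MulAction.IsPreprimitive.of_surjective (f := f) Function.surjective_id
  have h1 : φ g ∈ H := Subgroup.mem_sup_left ⟨g, rfl⟩
  have h2 : Equiv.swap a b * φ g * Equiv.swap a b ∈ H := by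
    refine Subgroup.mem_sup_right ⟨g, ?_⟩
    calc _ = Equiv.swap a b * (s * φ g * s⁻¹) * (Equiv.swap a b)⁻¹ := by
          simp [MulAut.conj_apply, mul_assoc]
      _ = _ := by rw [hs.eq, mul_inv_cancel_right, Equiv.swap_inv]
  refine Equiv.Perm.alternatingGroup_le_of_isPreprimitive_of_isThreeCycle_mem hprim
    (g := Equiv.swap b a * Equiv.swap b (g • a)) ?_ ?_
  · refine Equiv.Perm.isThreeCycle_swap_mul_swap_same hab.symm ?_ ha.symm
    intro h
    rw [← hb] at h
    exact hab.symm (MulAction.injective g h)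
  · have : Equiv.swap b a * Equiv.swap b (g • a) =
        Equiv.swap a b * φ g * Equiv.swap a b * (φ g)⁻¹ := by
      have h := Equiv.swap_apply_apply (φ g) a b
      rw [show φ g b = b from hb, show φ g a = g • a from rfl] at h
      rw [Equiv.swap_comm b a, Equiv.swap_comm b, h]
      simp only [mul_assoc]
    rw [this]
    exact H.mul_mem h2 (H.inv_mem h1)

/-- Two actions by even permutations which together generate at least the alternating group can be
transported to any finite set of the same cardinality. -/
theorem exists_homs_alternatingGroup {G X Y : Type*} [Group G] [Fintype X] [DecidableEq X]
    [Fintype Y] [DecidableEq Y] (e : X ≃ Y) (f₁ f₂ : G →* Equiv.Perm X)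
    (h : ∀ f : G →* ℤˣ, ∀ g, f g = 1) (htop : alternatingGroup X ≤ f₁.range ⊔ f₂.range)
    {v q : G} (h₁ : (f₂ q)⁻¹ * f₁ v * f₂ q = (f₁ v)⁻¹)
    (h₂ : (f₁ q)⁻¹ * f₂ v * f₁ q = (f₂ v)⁻¹) :
    ∃ i₁ i₂ : G →* alternatingGroup Y, (i₂ q)⁻¹ * i₁ v * i₂ q = (i₁ v)⁻¹ ∧
      (i₁ q)⁻¹ * i₂ v * i₁ q = (i₂ v)⁻¹ ∧ i₁.range ⊔ i₂.range = ⊤ := by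
  have hmem : ∀ f : G →* Equiv.Perm X, ∀ g, f g ∈ alternatingGroup X := fun f g =>
    Equiv.Perm.mem_alternatingGroup.2 (h (Equiv.Perm.sign.comp f) g)
  let j₁ := f₁.codRestrict (alternatingGroup X) (hmem f₁)
  let j₂ := f₂.codRestrict (alternatingGroup X) (hmem f₂)
  let ε := Equiv.altCongrHom e
  have hj : j₁.range ⊔ j₂.range = ⊤ := by
    refine Subgroup.map_injective (alternatingGroup X).subtype_injective (le_antisymm ?_ ?_)
    · exact Subgroup.map_mono le_top
    · rw [Subgroup.map_sup, MonoidHom.map_range, MonoidHom.map_range]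
      rw [← MonoidHom.range_eq_map, Subgroup.range_subtype]
      exact htop
  refine ⟨ε.toMonoidHom.comp j₁, ε.toMonoidHom.comp j₂, ?_, ?_, ?_⟩
  · have : (j₂ q)⁻¹ * j₁ v * j₂ q = (j₁ v)⁻¹ := Subtype.ext h₁
    simpa using congrArg ε this
  · have : (j₁ q)⁻¹ * j₂ v * j₁ q = (j₂ v)⁻¹ := Subtype.ext h₂
    simpa using congrArg ε this
  · rw [MonoidHom.range_comp, MonoidHom.range_comp, ← Subgroup.map_sup, hj,
      ← MonoidHom.range_eq_map, MonoidHom.range_eq_top]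
    exact ε.surjective

/-- Coordinates of `K ^ (3 * n)`, `n ≥ 3`, in three blocks: the nilpotent map sends the second block
to the first one, and the diagonal involution negates two coordinates of the third one. -/
def SlopeData.blocks (K : Type*) [Field K] (n : ℕ) (hn : 3 ≤ n) :
    SlopeData K (Fin (3 * n) → K) (Fin n) where
  N := LinearMap.pi fun k => if h : (k : ℕ) < n then
    LinearMap.proj (⟨k + n, by omega⟩ : Fin (3 * n)) else 0
  Q := LinearMap.pi fun k => if (k : ℕ) = 2 * n + 1 ∨ (k : ℕ) = 2 * n + 2 then
    -LinearMap.proj k else LinearMap.proj k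
  a i := LinearMap.proj ⟨i, by omega⟩
  b i := LinearMap.proj ⟨i + n, by omega⟩
  t := LinearMap.proj ⟨2 * n + 1, by omega⟩
  e := Pi.single ⟨2 * n + 1, by omega⟩ 1
  a_N i x := by simp
  a_Q i x := by
    have : ¬ ((i : ℕ) = 2 * n + 1 ∨ (i : ℕ) = 2 * n + 2) := by omega
    simp [this]
  a_e i := by
    have : (i : ℕ) ≠ 2 * n + 1 := by omega
    simp [this]
  b_N i x := by simp
  b_Q i x := by
    have : ¬ ((i : ℕ) + n = 2 * n + 1 ∨ (i : ℕ) + n = 2 * n + 2) := by omega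
    simp [this]
  b_e i := by
    have : (i : ℕ) + n ≠ 2 * n + 1 := by omega
    simp [this]
  t_N x := by
    have : ¬ (2 * n + 1 < n) := by omega
    simp [this]
  t_Q x := by simp
  t_e := by simp
  N_N x := by
    ext k
    simp only [LinearMap.pi_apply]
    split_ifs <;> simp
  N_Q x := by
    ext k
    simp only [LinearMap.pi_apply]
    split_ifs with h
    · have : ¬ ((k : ℕ) + n = 2 * n + 1 ∨ (k : ℕ) + n = 2 * n + 2) := by omega
      simp [this]
    · simp
  N_e := by
    ext k
    simp only [LinearMap.pi_apply]
    split_ifs with h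
    · have : (k : ℕ) + n ≠ 2 * n + 1 := by omega
      simp [this]
    · simp
  Q_N x := by
    ext k
    simp only [LinearMap.pi_apply]
    split_ifs with h h'
    · omega
    · simp [h']
    all_goals simp only [LinearMap.proj_apply, LinearMap.pi_apply, *, dite_true, dite_false]
  Q_Q x := by
    ext k
    simp only [LinearMap.pi_apply]
    split_ifs with h <;> simp [h]
  Q_e := by
    ext k
    simp only [LinearMap.pi_apply]
    split_ifs with h
    · simp
    · have : (k : ℕ) ≠ 2 * n + 1 := by omega
      simp [Fin.ext_iff, this]
  N_eq_zero x hx := by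
    ext k
    simp only [LinearMap.pi_apply]
    split_ifs with h
    · exact hx ⟨k, h⟩
    · simp

/-- **Lemma (Kassabov–Nikolov).**  Let `p` be an odd prime, `n ≥ 3`, and
`u = (p^{3n} - 1)/(p - 1)`.  In `K = SL_{3n}(F_p)` let `v` be the block elementary matrix
`Id + Σ_{i=1}^n E_{i, n+i}` and let `q` be the diagonal matrix with all entries `1` except
`-1` in positions `2n+2` and `2n+3` (written below with `0`-indexed rows and columns).
Then there are homomorphisms `i′, i″ : K → Alt(u)` with
`i″(q)⁻¹ i′(v) i″(q) = i′(v)⁻¹`, `i′(q)⁻¹ i″(v) i′(q) = i″(v)⁻¹`, and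
`⟨i′(K), i″(K)⟩ = Alt(u)`. -/
theorem exists_two_homs_to_alternating
    (p n : ℕ) [Fact p.Prime] (hodd : Odd p) (hn : 3 ≤ n)
    (v q : Matrix.SpecialLinearGroup (Fin (3 * n)) (ZMod p))
    (hv : ∀ i j : Fin (3 * n), (v : Matrix (Fin (3 * n)) (Fin (3 * n)) (ZMod p)) i j =
      if i = j then 1 else if (i : ℕ) < n ∧ (j : ℕ) = (i : ℕ) + n then 1 else 0)
    (hq : ∀ i j : Fin (3 * n), (q : Matrix (Fin (3 * n)) (Fin (3 * n)) (ZMod p)) i j =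
      if i = j then (if (i : ℕ) = 2 * n + 1 ∨ (i : ℕ) = 2 * n + 2 then -1 else 1) else 0) :
    ∃ i' i'' : Matrix.SpecialLinearGroup (Fin (3 * n)) (ZMod p) →*
        alternatingGroup (Fin ((p ^ (3 * n) - 1) / (p - 1))),
      (i'' q)⁻¹ * i' v * i'' q = (i' v)⁻¹ ∧
      (i' q)⁻¹ * i'' v * i' q = (i'' v)⁻¹ ∧
      i'.range ⊔ i''.range = ⊤ := by
  classical
  have : Nonempty (Fin n) := ⟨⟨0, by omega⟩⟩
  have : Nontrivial (Fin (3 * n)) := Fin.nontrivial_iff_two_le.2 (by omega)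
  have hp2 : (2 : ZMod p) ≠ 0 := by
    have : Fact (2 < p) := ⟨lt_of_le_of_ne (Fact.out : p.Prime).two_le (by
      rintro rfl
      exact absurd hodd (by decide))⟩
    exact Ring.two_ne_zero (by rw [ringChar.eq (ZMod p) p]; exact (Fact.out : 2 < p).ne')
  have : Fintype (ℙ (ZMod p) (Fin (3 * n) → ZMod p)) := Fintype.ofFinite _
  have hcard : Fintype.card (ℙ (ZMod p) (Fin (3 * n) → ZMod p)) = (p ^ (3 * n) - 1) / (p - 1) := by
    rw [← Nat.card_eq_fintype_card, Projectivization.card'']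
    simp
  let D := SlopeData.blocks (ZMod p) n hn
  have hvx : ∀ x : Fin (3 * n) → ZMod p, v • x = x + D.N x := by
    intro x
    ext k
    have : ∀ j, v.1 k j * x j = (if k = j then x j else 0) +
        if (k : ℕ) < n ∧ (j : ℕ) = k + n then x j else 0 := by
      intro j
      rw [hv]
      by_cases h : k = j
      · subst h
        have : n ≠ 0 := by omega
        simp [this]
      · simp [h]
    rw [Matrix.SpecialLinearGroup.smul_def, Matrix.smul_eq_mulVec, Matrix.mulVec, dotProduct,
      Finset.sum_congr rfl fun j _ => this j, Finset.sum_add_distrib]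
    simp only [Finset.sum_ite_eq, Finset.mem_univ, if_true, Pi.add_apply, add_right_inj]
    by_cases h : (k : ℕ) < n
    · rw [Finset.sum_eq_single (⟨k + n, by omega⟩ : Fin (3 * n))]
      · simp [D, SlopeData.blocks, h]
      · intro j _ hj
        exact if_neg fun hj' => hj (Fin.ext hj'.2)
      · simp
    · simp [D, SlopeData.blocks, h]
  have hqx : ∀ x : Fin (3 * n) → ZMod p, q • x = D.Q x := by
    intro x
    ext k
    rw [Matrix.SpecialLinearGroup.smul_def, Matrix.smul_eq_mulVec, Matrix.mulVec, dotProduct]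
    simp only [hq, ite_mul, zero_mul, Finset.sum_ite_eq, Finset.mem_univ, if_true]
    simp only [D, SlopeData.blocks, LinearMap.pi_apply]
    split_ifs <;> simp
  let r : Fin (3 * n) := ⟨2 * n, by omega⟩
  let t : Fin (3 * n) := ⟨2 * n + 2, by omega⟩
  have hrt : r ≠ t := by simp [r, t]
  let g := Matrix.SpecialLinearGroup.transvection hrt (1 : ZMod p)
  have hgx : ∀ x : Fin (3 * n) → ZMod p, ∀ k, (g • x) k = x k + if k = r then x t else 0 := by
    intro x k
    change ((1 + Matrix.single r t (1 : ZMod p)).mulVec x) k = _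
    rw [Matrix.add_mulVec, Matrix.one_mulVec, Pi.add_apply, Matrix.single_mulVec]
    by_cases hk : k = r <;> simp [hk]
  let φ := MulAction.toPermHom (Matrix.SpecialLinearGroup (Fin (3 * n)) (ZMod p))
    (ℙ (ZMod p) (Fin (3 * n) → ZMod p))
  let s : Equiv.Perm (ℙ (ZMod p) (Fin (3 * n) → ZMod p)) :=
    Projectivization.permOfInvolutive D.twist D.twist_twist D.twist_smul
  have hne : ∀ i, (Pi.single i 1 : Fin (3 * n) → ZMod p) ≠ 0 := by simp
  let a : ℙ (ZMod p) (Fin (3 * n) → ZMod p) := .mk _ (Pi.single t 1) (hne t)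
  let b : ℙ (ZMod p) (Fin (3 * n) → ZMod p) := .mk _ (Pi.single r 1) (hne r)
  have hNr : ∀ i : Fin (3 * n), 2 * n ≤ i → D.N (Pi.single i 1) = 0 := by
    intro i hi
    refine D.N_eq_zero _ fun j => ?_
    have : (j : ℕ) + n ≠ i := by omega
    simp [D, SlopeData.blocks, Fin.ext_iff, this]
  have hva : v • a = a := by
    simp [a, hvx, hNr t (by simp [t])]
  have hvb : v • b = b := by
    simp [b, hvx, hNr r (by simp [r])]
  have hqa : q • a = a := by
    rw [Projectivization.smul_mk, Projectivization.mk_eq_mk_iff]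
    refine ⟨-1, ?_⟩
    ext k
    rw [hqx]
    by_cases hk : k = t
    · subst hk
      simp [D, SlopeData.blocks, t]
    · by_cases hk' : (k : ℕ) = 2 * n + 1 ∨ (k : ℕ) = 2 * n + 2 <;>
        simp [D, SlopeData.blocks, hk, hk']
  have hqb : q • b = b := by
    rw [Projectivization.smul_mk, Projectivization.mk_eq_mk_iff]
    refine ⟨1, ?_⟩
    ext k
    rw [hqx]
    by_cases hk : k = r
    · subst hk
      simp [D, SlopeData.blocks, r]
    · by_cases hk' : (k : ℕ) = 2 * n + 1 ∨ (k : ℕ) = 2 * n + 2 <;>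
        simp [D, SlopeData.blocks, hk, hk']
  have hswap : ∀ h : Matrix.SpecialLinearGroup (Fin (3 * n)) (ZMod p), h • a = a → h • b = b →
      Commute (Equiv.swap a b) (φ h) := by
    intro h ha hb
    have := Equiv.mul_swap_eq_swap_mul (φ h) a b
    rw [show φ h a = a from ha, show φ h b = b from hb] at this
    exact this.symm
  have htwist : ∀ {x}, x ≠ 0 → D.twist x ≠ 0 := fun {x} hx h => hx (by
    rw [← D.twist_twist x, h]
    simpa using D.twist_smul 0 0)
  have hs : ∀ x hx, s (.mk _ x hx) = .mk _ (D.twist x) (htwist hx) := fun _ _ => rfl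
  have hss : s * s = 1 := Equiv.ext fun P => by
    induction P using Projectivization.ind with | h x hx =>
    simp [hs, D.twist_twist]
  have hqq : φ q * φ q = 1 := Equiv.ext fun P => by
    induction P using Projectivization.ind with | h x hx =>
    simp [φ, hqx]
  have hinv : s * φ q * s * φ v * (s * φ q * s) * φ v = 1 := Equiv.ext fun P => by
    induction P using Projectivization.ind with | h x hx =>
    simp [hs, φ, hqx, hvx, D.twist_Q_twist_inverts]
  have hsg : Commute s (φ g) := Equiv.ext fun P => by
    induction P using Projectivization.ind with | h x hx =>
    have : D.twist (g • x) = g • D.twist x := by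
      refine D.twist_commute (Matrix.mulVecLin g.1) (fun i x => ?_) (fun i x => ?_) (fun x => ?_)
        (fun x => ?_) ?_ x
      · have : (i : ℕ) ≠ 2 * n := by omega
        exact (hgx x _).trans (by simp [D, SlopeData.blocks, r, this])
      · have : (i : ℕ) + n ≠ 2 * n := by omega
        exact (hgx x _).trans (by simp [D, SlopeData.blocks, r, this])
      · exact (hgx x _).trans (by simp [D, SlopeData.blocks, r])
      · ext k
        refine Eq.trans ?_ (hgx (D.N x) k).symm
        by_cases hk : (k : ℕ) < n
        · have h₁ : (k : ℕ) + n ≠ 2 * n := by omega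
          have h₂ : (k : ℕ) ≠ 2 * n := by omega
          have := hgx x ⟨k + n, by omega⟩
          simp only [D, SlopeData.blocks, LinearMap.pi_apply, hk, dite_true]
          exact this.trans (by simp [r, Fin.ext_iff, h₁, h₂])
        · have : ¬ (2 * n + 2 < n) := by omega
          simp [D, SlopeData.blocks, hk, t, this]
      · ext k
        exact (hgx _ k).trans (by simp [D, SlopeData.blocks, t])
    simp [hs, φ, this]
  have hgb : g • b = b := by
    simp [b, g, Matrix.SpecialLinearGroup.transvection_smul_single_fst]
  have hga : g • a ≠ a := by
    intro h
    rw [Projectivization.smul_mk, Projectivization.mk_eq_mk_iff] at h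
    obtain ⟨c, hc⟩ := h
    have := congrFun hc r
    rw [hgx] at this
    simp [hrt] at this
  obtain ⟨h₁, h₂⟩ := conj_inverts hss (Equiv.swap_mul_self a b) (hswap v hva hvb)
    (hswap q hqa hqb) hqq hinv
  exact exists_homs_alternatingGroup (Fintype.equivFinOfCardEq hcard) φ
    ((MulAut.conj (Equiv.swap a b * s)).toMonoidHom.comp φ)
    (Matrix.SpecialLinearGroup.hom_intUnits_eq_one hp2)
    (alternatingGroup_le_range_sup_range hsg hgb hga) h₁ h₂
end

section
/- Let p be an odd prime and n ≥ 3. Let v := Id_{3n} + Σ_{i=1}^n E_{i,n+i} ∈ SL_{3n}(F_p) and let q ∈ SL_{3n}(F_p) be the diagonal matrix with all diagonal entries 1 except −1 in positions 2n+2 and 2n+3; note q and v commute. Consider the m := (p^{3n} − p^{2n})/(p(p − 1)) orbits of length p of the permutation induced by v on the projective space P of F_p^{3n}. Then the permutation induced by q fixes exactly m/p² of these p-orbits pointwise, and maps each of the remaining p-orbits onto a different p-orbit. -/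
/-- Coefficients `k : K` shear a vector along the endomorphism `N`. -/
def shear {K V : Type*} [Field K] [AddCommGroup V] [Module K V] (N : V →ₗ[K] V) (k : K) (w : V) :
    V :=
  w + k • N w

section Shear

variable {K V : Type*} [Field K] [AddCommGroup V] [Module K V] {N : V →ₗ[K] V}

lemma map_shear (hN : ∀ w, N (N w) = 0) (k : K) (w : V) : N (shear N k w) = N w := by
  simp [shear, hN]

lemma shear_shear (hN : ∀ w, N (N w) = 0) (k l : K) (w : V) :
    shear N k (shear N l w) = shear N (k + l) w := by
  have h := map_shear hN l w
  rw [shear, h]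
  simp only [shear]
  module

lemma shear_zero (w : V) : shear N (0 : K) w = w := by simp [shear]

lemma shear_ne_zero (hN : ∀ w, N (N w) = 0) (k : K) {w : V} (hw : w ≠ 0) : shear N k w ≠ 0 := by
  intro h
  have h1 := map_shear hN k w
  rw [h, map_zero] at h1
  rw [shear, ← h1, smul_zero, add_zero] at h
  exact hw h

lemma eq_one_of_shear_eq_smul_shear (hN : ∀ w, N (N w) = 0) {k l c : K} {w : V} (hw : N w ≠ 0)
    (h : shear N k w = c • shear N l w) : c = 1 := by
  have h1 := congrArg N h
  rw [map_smul, map_shear hN, map_shear hN] at h1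
  have h2 : (1 - c) • N w = 0 := by rw [sub_smul, one_smul, ← h1, sub_self]
  rcases smul_eq_zero.mp h2 with h3 | h3
  · exact (sub_eq_zero.mp h3).symm
  · exact absurd h3 hw

lemma shear_coeff_injective {k l : K} {w : V} (hw : N w ≠ 0)
    (h : shear N k w = shear N l w) : k = l := by
  simp only [shear, add_right_inj] at h
  exact smul_left_injective K hw h

open scoped LinearAlgebra.Projectivization

variable {σ : Equiv.Perm (ℙ K V)}

lemma zpow_mk_eq_mk_shear (hN : ∀ w, N (N w) = 0)
    (hσ : ∀ (w : V) (hw : w ≠ 0),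
      σ (Projectivization.mk K w hw) = Projectivization.mk K (shear N 1 w) (shear_ne_zero hN 1 hw))
    (k : ℤ) (w : V) (hw : w ≠ 0) :
    (σ ^ k) (Projectivization.mk K w hw) =
      Projectivization.mk K (shear N (k : K) w) (shear_ne_zero hN _ hw) := by
  induction k with
  | zero => simp [shear_zero]
  | succ k ih =>
    rw [add_comm, zpow_add, Equiv.Perm.mul_apply, ih, zpow_one, hσ]
    congr 1
    rw [shear_shear hN]
    push_cast
    rfl
  | pred k ih =>
    rw [sub_eq_add_neg, add_comm, zpow_add, Equiv.Perm.mul_apply, ih, zpow_neg_one,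
      Equiv.Perm.inv_eq_iff_eq, hσ]
    congr 1
    rw [shear_shear hN]
    push_cast
    congr 1
    ring

lemma apply_mk_ne_self_iff (hN : ∀ w, N (N w) = 0)
    (hσ : ∀ (w : V) (hw : w ≠ 0),
      σ (Projectivization.mk K w hw) = Projectivization.mk K (shear N 1 w) (shear_ne_zero hN 1 hw))
    (w : V) (hw : w ≠ 0) :
    σ (Projectivization.mk K w hw) ≠ Projectivization.mk K w hw ↔ N w ≠ 0 := by
  rw [hσ, ne_eq, Projectivization.mk_eq_mk_iff', not_iff_not]
  constructor
  · rintro ⟨c, hc⟩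
    by_contra hNw
    rw [← shear_zero (N := N) w, shear_shear hN, add_zero] at hc
    have h1 := eq_one_of_shear_eq_smul_shear hN hNw hc.symm
    rw [h1, one_smul] at hc
    exact zero_ne_one (shear_coeff_injective hNw hc)
  · intro h
    exact ⟨1, by simp [shear, h]⟩

/-- An involution fixing the image of `N` that maps a point moved by the shear into its own orbit
fixes the underlying vector. -/
lemma eq_self_of_eq_smul_shear (hN : ∀ w, N (N w) = 0) (h2 : (2 : K) ≠ 0) {Q : V →ₗ[K] V}
    (hQQ : ∀ w, Q (Q w) = w) (hQN : ∀ w, Q (N w) = N w) (hNQ : ∀ w, N (Q w) = N w)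
    {k c : K} {w : V} (hw : N w ≠ 0) (h : c • shear N k w = Q w) : Q w = w := by
  have h1 := congrArg N h
  rw [map_smul, map_shear hN, hNQ] at h1
  have hc : c = 1 := smul_left_injective K hw (by simpa using h1)
  subst hc
  rw [one_smul, shear] at h
  have h3 := congrArg Q h
  rw [map_add, map_smul, hQN, hQQ, ← h, add_assoc, ← add_smul, ← two_mul, add_eq_left] at h3
  rcases smul_eq_zero.mp h3 with h4 | h4
  · have hk : k = 0 := (mul_eq_zero.mp h4).resolve_left h2
    rw [← h, hk, zero_smul, add_zero]
  · exact absurd h4 hw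

lemma map_shear_comm {Q : V →ₗ[K] V} (hQN : ∀ w, Q (N w) = N w) (hNQ : ∀ w, N (Q w) = N w)
    (k : K) (w : V) : Q (shear N k w) = shear N k (Q w) := by
  simp [shear, hQN, hNQ]

end Shear

section Orbits

open scoped LinearAlgebra.Projectivization

variable {p : ℕ} [Fact p.Prime] {V : Type*} [AddCommGroup V] [Module (ZMod p) V]
  {N Q : V →ₗ[ZMod p] V} {σ τ : Equiv.Perm (ℙ (ZMod p) V)}

lemma range_zpow_mk (hN : ∀ w, N (N w) = 0)
    (hσ : ∀ (w : V) (hw : w ≠ 0), σ (Projectivization.mk (ZMod p) w hw) =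
      Projectivization.mk (ZMod p) (shear N 1 w) (shear_ne_zero hN 1 hw))
    (w : V) (hw : w ≠ 0) :
    (Set.range fun k : ℤ => (σ ^ k) (Projectivization.mk (ZMod p) w hw)) =
      Set.range fun k : ZMod p =>
        Projectivization.mk (ZMod p) (shear N k w) (shear_ne_zero hN k hw) := by
  ext x
  constructor
  · rintro ⟨k, rfl⟩
    exact ⟨k, (zpow_mk_eq_mk_shear hN hσ k w hw).symm⟩
  · rintro ⟨k, rfl⟩
    obtain ⟨k, rfl⟩ := ZMod.intCast_surjective k
    exact ⟨k, zpow_mk_eq_mk_shear hN hσ k w hw⟩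

lemma range_mk_shear_eq (hN : ∀ w, N (N w) = 0) {w w' : V} (hw : w ≠ 0) (hw' : w' ≠ 0)
    {c k : ZMod p} (h : c • shear N k w = w') :
    (Set.range fun k : ZMod p =>
        Projectivization.mk (ZMod p) (shear N k w') (shear_ne_zero hN k hw')) =
      Set.range fun k : ZMod p =>
        Projectivization.mk (ZMod p) (shear N k w) (shear_ne_zero hN k hw) := by
  have key : ∀ l : ZMod p,
      Projectivization.mk (ZMod p) (shear N l w') (shear_ne_zero hN l hw') =
        Projectivization.mk (ZMod p) (shear N (l + k) w) (shear_ne_zero hN _ hw) := by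
    intro l
    rw [Projectivization.mk_eq_mk_iff']
    refine ⟨c, ?_⟩
    rw [← h, ← shear_shear hN]
    simp only [shear, map_smul, map_add, smul_add]
    module
  ext x
  constructor
  · rintro ⟨l, rfl⟩
    exact ⟨l + k, (key l).symm⟩
  · rintro ⟨l, rfl⟩
    refine ⟨l - k, ?_⟩
    simp only [key, sub_add_cancel]

/-- The involution either fixes a nontrivial orbit of the shear pointwise or moves it to another
nontrivial orbit. -/
lemma fixes_or_moves_orbit (hN : ∀ w, N (N w) = 0) (h2 : (2 : ZMod p) ≠ 0)
    (hQQ : ∀ w, Q (Q w) = w) (hQN : ∀ w, Q (N w) = N w) (hNQ : ∀ w, N (Q w) = N w)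
    (hQ0 : ∀ w, w ≠ 0 → Q w ≠ 0)
    (hσ : ∀ (w : V) (hw : w ≠ 0), σ (Projectivization.mk (ZMod p) w hw) =
      Projectivization.mk (ZMod p) (shear N 1 w) (shear_ne_zero hN 1 hw))
    (hτ : ∀ (w : V) (hw : w ≠ 0), τ (Projectivization.mk (ZMod p) w hw) =
      Projectivization.mk (ZMod p) (Q w) (hQ0 w hw))
    (O : Set (ℙ (ZMod p) V)) (hO : ∃ x, σ x ≠ x ∧ O = Set.range fun k : ℤ => (σ ^ k) x)
    (hfix : ¬∀ x ∈ O, τ x = x) :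
    τ '' O ≠ O ∧ ∃ y, σ y ≠ y ∧ τ '' O = Set.range fun k : ℤ => (σ ^ k) y := by
  obtain ⟨x, hx, rfl⟩ := hO
  induction x using Projectivization.ind with | h w hw => ?_
  rw [apply_mk_ne_self_iff hN hσ] at hx
  rw [range_zpow_mk hN hσ] at hfix ⊢
  constructor
  · intro heq
    have hmem := Set.mem_image_of_mem τ (Set.mem_range_self (f := fun k : ZMod p =>
      Projectivization.mk (ZMod p) (shear N k w) (shear_ne_zero hN k hw)) 0)
    simp only [shear_zero] at hmem
    rw [heq, hτ] at hmem
    obtain ⟨k, hk⟩ := hmem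
    obtain ⟨c, hc⟩ := (Projectivization.mk_eq_mk_iff' ..).mp hk.symm
    have hQw := eq_self_of_eq_smul_shear hN h2 hQQ hQN hNQ hx hc
    apply hfix
    rintro _ ⟨l, rfl⟩
    simp only [hτ, map_shear_comm hQN hNQ, hQw]
  · refine ⟨τ (Projectivization.mk (ZMod p) w hw), ?_, ?_⟩
    · rw [hτ, apply_mk_ne_self_iff hN hσ, hNQ]
      exact hx
    · rw [hτ, range_zpow_mk hN hσ, ← Set.range_comp]
      congr 1
      funext k
      simp only [Function.comp, hτ, map_shear_comm hQN hNQ]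

/-- Each nontrivial orbit of the shear fixed pointwise by the involution lifts to `p * (p - 1)`
vectors. -/
lemma card_fixed_orbits_mul (hN : ∀ w, N (N w) = 0) (h2 : (2 : ZMod p) ≠ 0)
    (hQQ : ∀ w, Q (Q w) = w) (hQN : ∀ w, Q (N w) = N w) (hNQ : ∀ w, N (Q w) = N w)
    (hQ0 : ∀ w, w ≠ 0 → Q w ≠ 0)
    (hσ : ∀ (w : V) (hw : w ≠ 0), σ (Projectivization.mk (ZMod p) w hw) =
      Projectivization.mk (ZMod p) (shear N 1 w) (shear_ne_zero hN 1 hw))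
    (hτ : ∀ (w : V) (hw : w ≠ 0), τ (Projectivization.mk (ZMod p) w hw) =
      Projectivization.mk (ZMod p) (Q w) (hQ0 w hw)) :
    Nat.card {O : Set (ℙ (ZMod p) V) |
        (∃ x, σ x ≠ x ∧ O = Set.range fun k : ℤ => (σ ^ k) x) ∧ ∀ x ∈ O, τ x = x} *
      (p * (p - 1)) = Nat.card {w : V | Q w = w ∧ N w ≠ 0} := by
  set S := {O : Set (ℙ (ZMod p) V) |
        (∃ x, σ x ≠ x ∧ O = Set.range fun k : ℤ => (σ ^ k) x) ∧ ∀ x ∈ O, τ x = x}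
  have hrep : ∀ O : S, ∃ (w : V) (hw : w ≠ 0), Q w = w ∧ N w ≠ 0 ∧
      (O : Set (ℙ (ZMod p) V)) = Set.range fun k : ZMod p =>
        Projectivization.mk (ZMod p) (shear N k w) (shear_ne_zero hN k hw) := by
    rintro ⟨O, ⟨x, hx, rfl⟩, hfix⟩
    induction x using Projectivization.ind with | h w hw => ?_
    rw [apply_mk_ne_self_iff hN hσ] at hx
    refine ⟨w, hw, ?_, hx, range_zpow_mk hN hσ w hw⟩
    have h1 := hfix (Projectivization.mk (ZMod p) w hw) ⟨0, by simp⟩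
    rw [hτ] at h1
    obtain ⟨c, hc⟩ := (Projectivization.mk_eq_mk_iff' ..).mp h1
    refine eq_self_of_eq_smul_shear (k := 0) (c := c) hN h2 hQQ hQN hNQ hx ?_
    rwa [shear_zero]
  choose r hr0 hrQ hrN hrO using hrep
  let f : S × (ZMod p × (ZMod p)ˣ) → {w : V | Q w = w ∧ N w ≠ 0} := fun t =>
    ⟨(t.2.2 : ZMod p) • shear N t.2.1 (r t.1), by
      refine ⟨?_, ?_⟩
      · rw [map_smul, map_shear_comm hQN hNQ, hrQ]
      · rw [map_smul, map_shear hN]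
        exact smul_ne_zero t.2.2.ne_zero (hrN _)⟩
  have hf : Function.Bijective f := by
    constructor
    · rintro ⟨O, k, u⟩ ⟨O', k', u'⟩ h
      have h1 : (u : ZMod p) • shear N k (r O) = (u' : ZMod p) • shear N k' (r O') :=
        congrArg Subtype.val h
      have h0 : (u : ZMod p) • shear N k (r O) ≠ 0 :=
        smul_ne_zero u.ne_zero (shear_ne_zero hN k (hr0 O))
      have hOO : O = O' := by
        apply Subtype.ext
        rw [hrO O, hrO O', ← range_mk_shear_eq hN (hr0 O) h0 rfl,
          ← range_mk_shear_eq hN (hr0 O') h0 h1.symm]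
      subst hOO
      have h3 := congrArg N h1
      rw [map_smul, map_smul, map_shear hN, map_shear hN] at h3
      have hu : u = u' := Units.ext (smul_left_injective _ (hrN O) h3)
      subst hu
      have hk := shear_coeff_injective (hrN O) (smul_right_injective _ u.ne_zero h1)
      rw [hk]
    · rintro ⟨w, hQw, hNw⟩
      have hw : w ≠ 0 := by
        rintro rfl
        exact hNw (map_zero N)
      let O : S := ⟨Set.range fun k : ZMod p =>
          Projectivization.mk (ZMod p) (shear N k w) (shear_ne_zero hN k hw),
        ⟨Projectivization.mk (ZMod p) w hw, (apply_mk_ne_self_iff hN hσ w hw).mpr hNw,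
          (range_zpow_mk hN hσ w hw).symm⟩, by
          rintro _ ⟨l, rfl⟩
          simp only [hτ, map_shear_comm hQN hNQ, hQw]⟩
      have hmem : Projectivization.mk (ZMod p) w hw ∈ (O : Set (ℙ (ZMod p) V)) :=
        ⟨0, by simp only [shear_zero]⟩
      rw [hrO O] at hmem
      obtain ⟨k, hk⟩ := hmem
      obtain ⟨u, hu⟩ := (Projectivization.mk_eq_mk_iff ..).mp hk.symm
      exact ⟨⟨O, k, u⟩, Subtype.ext hu⟩
  rw [← Nat.card_congr (Equiv.ofBijective f hf), Nat.card_prod, Nat.card_prod, Nat.card_zmod,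
    Nat.card_eq_fintype_card (α := (ZMod p)ˣ), ZMod.card_units]

end Orbits

/-- Functions vanishing on a prescribed finset are counted by their values elsewhere. -/
lemma card_filter_forall_mem_eq_zero {ι F : Type*} [Fintype ι] [DecidableEq ι] [Fintype F]
    [DecidableEq F] [Zero F] (s : Finset ι) :
    (Finset.univ.filter fun w : ι → F => ∀ i ∈ s, w i = 0).card =
      Fintype.card F ^ (Fintype.card ι - s.card) := by
  have h : (Finset.univ.filter fun w : ι → F => ∀ i ∈ s, w i = 0) =
      Fintype.piFinset fun i => if i ∈ s then {0} else Finset.univ := by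
    ext w
    simp only [Finset.mem_filter, Finset.mem_univ, true_and, Fintype.mem_piFinset]
    refine forall_congr' fun i => ?_
    split_ifs with hi <;> simp [hi]
  rw [h, Fintype.card_piFinset, ← Finset.card_compl]
  have h' : ∀ i, (if i ∈ s then ({0} : Finset F) else Finset.univ).card =
      if i ∈ sᶜ then Fintype.card F else 1 := by
    intro i
    by_cases hi : i ∈ s <;> simp [hi]
  simp only [h', Finset.prod_ite_mem, Finset.univ_inter, Finset.prod_const]

/-- Functions vanishing on `s` but not on all of a disjoint `t`. -/
lemma card_vanishing_not_vanishing {ι F : Type*} [Fintype ι] [DecidableEq ι] [Fintype F]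
    [DecidableEq F] [Zero F] {s t : Finset ι} (hst : Disjoint s t) :
    Nat.card {w : ι → F | (∀ i ∈ s, w i = 0) ∧ ¬∀ i ∈ t, w i = 0} =
      Fintype.card F ^ (Fintype.card ι - s.card) -
        Fintype.card F ^ (Fintype.card ι - (s.card + t.card)) := by
  rw [← card_filter_forall_mem_eq_zero (F := F) s, ← Finset.card_union_of_disjoint hst,
    ← card_filter_forall_mem_eq_zero (F := F) (s ∪ t), ← Finset.card_sdiff_of_subset,
    Nat.card_eq_fintype_card, Set.fintypeCard_eq_ncard, Set.ncard_eq_toFinset_card']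
  · congr 1
    ext w
    simp only [Set.mem_toFinset, Set.mem_ofPred_eq, Finset.mem_sdiff, Finset.mem_filter,
      Finset.mem_univ, true_and, Finset.mem_union, or_imp, forall_and]
    tauto
  · intro w
    simp only [Finset.mem_filter, Finset.mem_univ, true_and, Finset.mem_union]
    exact fun h i hi => h i (Or.inl hi)

lemma pow_sub_pow_div_eq {p n c : ℕ} (hp : 1 < p) (hn : 3 ≤ n)
    (h : c * (p * (p - 1)) = p ^ (3 * n - 2) - p ^ (3 * n - (2 + n))) :
    c = (p ^ (3 * n) - p ^ (2 * n)) / (p * (p - 1)) / p ^ 2 := by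
  have h1 : p ^ (3 * n) - p ^ (2 * n) = c * p ^ 2 * (p * (p - 1)) := by
    rw [show c * p ^ 2 * (p * (p - 1)) = c * (p * (p - 1)) * p ^ 2 by ring, h, Nat.sub_mul,
      ← pow_add, ← pow_add]
    congr 2 <;> omega
  have h2 : 0 < p * (p - 1) := Nat.mul_pos (by omega) (by omega)
  rw [h1, Nat.mul_div_cancel _ h2, Nat.mul_div_cancel _ (by positivity)]


open scoped LinearAlgebra.Projectivization in
/-- **Lemma (Kassabov–Nikolov).**  Let `p` be an odd prime, `n ≥ 3`, and in
`SL_{3n}(F_p)` let `v = Id + Σ_{i=1}^n E_{i,n+i}` and let `q` be the diagonal matrix with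
all diagonal entries `1` except `-1` in positions `2n+2` and `2n+3` (written below with
`0`-indexed rows and columns).  Let `σv`, `σq` be the permutations induced by `v`, `q` on
the projective space `P` of `F_p^{3n}`.  Among the `m = (p^{3n} - p^{2n})/(p(p-1))`
nontrivial (length `p`) orbits of `σv`, exactly `m/p²` are fixed pointwise by `σq`, and
`σq` maps each of the remaining orbits onto a different orbit. -/
theorem q_fixes_exactly_one_over_p_squared_of_v_orbits
    (p n : ℕ) [Fact p.Prime] (hodd : Odd p) (hn : 3 ≤ n)
    (v q : Matrix (Fin (3 * n)) (Fin (3 * n)) (ZMod p))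
    (hv : ∀ i j : Fin (3 * n), v i j =
      if i = j then 1 else if (i : ℕ) < n ∧ (j : ℕ) = (i : ℕ) + n then 1 else 0)
    (hq : ∀ i j : Fin (3 * n), q i j =
      if i = j then (if (i : ℕ) = 2 * n + 1 ∨ (i : ℕ) = 2 * n + 2 then -1 else 1) else 0)
    (σv σq : Equiv.Perm (ℙ (ZMod p) (Fin (3 * n) → ZMod p)))
    (hσv : ∀ (w : Fin (3 * n) → ZMod p) (hw : w ≠ 0) (hvw : v.mulVec w ≠ 0),
      σv (Projectivization.mk (ZMod p) w hw) =
        Projectivization.mk (ZMod p) (v.mulVec w) hvw)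
    (hσq : ∀ (w : Fin (3 * n) → ZMod p) (hw : w ≠ 0) (hqw : q.mulVec w ≠ 0),
      σq (Projectivization.mk (ZMod p) w hw) =
        Projectivization.mk (ZMod p) (q.mulVec w) hqw) :
    Nat.card {O : Set (ℙ (ZMod p) (Fin (3 * n) → ZMod p)) |
        (∃ x, σv x ≠ x ∧ O = Set.range fun k : ℤ => (σv ^ k) x) ∧
          ∀ x ∈ O, σq x = x} =
      (p ^ (3 * n) - p ^ (2 * n)) / (p * (p - 1)) / p ^ 2 ∧
    ∀ O : Set (ℙ (ZMod p) (Fin (3 * n) → ZMod p)),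
      (∃ x, σv x ≠ x ∧ O = Set.range fun k : ℤ => (σv ^ k) x) →
      (¬∀ x ∈ O, σq x = x) →
        (σq '' O ≠ O ∧
          ∃ y, σv y ≠ y ∧ σq '' O = Set.range fun k : ℤ => (σv ^ k) y) := by
  have hp : p.Prime := Fact.out
  have hp2 : p ≠ 2 := by rintro rfl; exact absurd hodd (by decide)
  have h2 : (2 : ZMod p) ≠ 0 := by
    have := ZMod.prime_ne_zero p 2 hp2
    exact_mod_cast this
  have hM : ∀ i j, (v - 1) i j =
      if (i : ℕ) < n ∧ (j : ℕ) = (i : ℕ) + n then 1 else 0 := by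
    intro i j
    rw [Matrix.sub_apply, hv, Matrix.one_apply]
    by_cases hij : i = j
    · subst hij
      have : ¬((i : ℕ) < n ∧ (i : ℕ) = (i : ℕ) + n) := by omega
      rw [if_pos rfl, if_pos rfl, if_neg this, sub_self]
    · simp [hij]
  have hqd : q = Matrix.diagonal fun i : Fin (3 * n) =>
      if (i : ℕ) = 2 * n + 1 ∨ (i : ℕ) = 2 * n + 2 then (-1 : ZMod p) else 1 := by
    ext i j
    rw [hq, Matrix.diagonal_apply]
  have hMM : (v - 1) * (v - 1) = 0 := by
    ext i j
    rw [Matrix.mul_apply, Matrix.zero_apply]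
    refine Finset.sum_eq_zero fun k _ => ?_
    rw [hM, hM]
    split_ifs <;> first | omega | simp
  have hqM : q * (v - 1) = v - 1 := by
    ext i j
    rw [hqd, Matrix.diagonal_mul, hM]
    split_ifs <;> first | omega | simp
  have hMq : (v - 1) * q = v - 1 := by
    ext i j
    rw [hqd, Matrix.mul_diagonal, hM]
    split_ifs <;> first | omega | simp
  have hqq : q * q = 1 := by
    rw [hqd, Matrix.diagonal_mul_diagonal, ← Matrix.diagonal_one]
    congr 1
    funext i
    split_ifs <;> simp
  have hN : ∀ w, Matrix.toLin' (v - 1) (Matrix.toLin' (v - 1) w) = 0 := by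
    intro w
    rw [← Matrix.toLin'_mul_apply, hMM, map_zero, LinearMap.zero_apply]
  have hQN : ∀ w, Matrix.toLin' q (Matrix.toLin' (v - 1) w) = Matrix.toLin' (v - 1) w := by
    intro w
    rw [← Matrix.toLin'_mul_apply, hqM]
  have hNQ : ∀ w, Matrix.toLin' (v - 1) (Matrix.toLin' q w) = Matrix.toLin' (v - 1) w := by
    intro w
    rw [← Matrix.toLin'_mul_apply, hMq]
  have hQQ : ∀ w, Matrix.toLin' q (Matrix.toLin' q w) = w := by
    intro w
    rw [← Matrix.toLin'_mul_apply, hqq, Matrix.toLin'_one, LinearMap.id_apply]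
  have hQ0 : ∀ w, w ≠ 0 → Matrix.toLin' q w ≠ 0 := by
    intro w hw h
    exact hw (by rw [← hQQ w, h, map_zero])
  have hvs : ∀ w, v.mulVec w = shear (Matrix.toLin' (v - 1)) 1 w := by
    intro w
    rw [shear, one_smul, Matrix.toLin'_apply, Matrix.sub_mulVec, Matrix.one_mulVec,
      add_sub_cancel]
  have hσ : ∀ (w : Fin (3 * n) → ZMod p) (hw : w ≠ 0),
      σv (Projectivization.mk (ZMod p) w hw) = Projectivization.mk (ZMod p)
        (shear (Matrix.toLin' (v - 1)) 1 w) (shear_ne_zero hN 1 hw) := by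
    intro w hw
    rw [hσv w hw (by rw [hvs]; exact shear_ne_zero hN 1 hw)]
    congr 1
    exact hvs w
  have hτ : ∀ (w : Fin (3 * n) → ZMod p) (hw : w ≠ 0),
      σq (Projectivization.mk (ZMod p) w hw) =
        Projectivization.mk (ZMod p) (Matrix.toLin' q w) (hQ0 w hw) :=
    fun w hw => hσq w hw (hQ0 w hw)
  refine ⟨?_, fixes_or_moves_orbit hN h2 hQQ hQN hNQ hQ0 hσ hτ⟩
  apply pow_sub_pow_div_eq hp.one_lt hn
  rw [card_fixed_orbits_mul hN h2 hQQ hQN hNQ hQ0 hσ hτ]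
  let s : Finset (Fin (3 * n)) := {⟨2 * n + 1, by omega⟩, ⟨2 * n + 2, by omega⟩}
  let e : Fin n ↪ Fin (3 * n) :=
    ⟨fun i => ⟨i + n, by omega⟩, fun i j h => by
      simp only [Fin.mk.injEq] at h
      omega⟩
  let t : Finset (Fin (3 * n)) := Finset.univ.map e
  have he : ∀ i, (e i : ℕ) = i + n := fun _ => rfl
  have hs : s.card = 2 := Finset.card_pair (by simp)
  have ht : t.card = n := by simp [t]
  have hst : Disjoint s t := by
    rw [Finset.disjoint_left]
    intro i hi hi'
    simp only [s, t, Finset.mem_insert, Finset.mem_singleton, Finset.mem_map,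
      Finset.mem_univ, true_and, Fin.ext_iff, he] at hi hi'
    obtain ⟨a, ha⟩ := hi'
    omega
  have hset : {w : Fin (3 * n) → ZMod p |
      Matrix.toLin' q w = w ∧ Matrix.toLin' (v - 1) w ≠ 0} =
      {w | (∀ i ∈ s, w i = 0) ∧ ¬∀ i ∈ t, w i = 0} := by
    ext w
    refine and_congr ?_ (not_congr ?_)
    · rw [Matrix.toLin'_apply, hqd, funext_iff]
      simp only [Matrix.mulVec_diagonal]
      refine forall_congr' fun i => ?_
      have hi : i ∈ s ↔ ((i : ℕ) = 2 * n + 1 ∨ (i : ℕ) = 2 * n + 2) := by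
        simp [s, Fin.ext_iff]
      rw [hi]
      split_ifs with h
      · rw [neg_one_mul, neg_eq_iff_add_eq_zero, ← two_mul]
        simp [h, h2]
      · simp [h]
    · have hNw : ∀ i : Fin n, (Matrix.toLin' (v - 1) w) ⟨i, by omega⟩ = w (e i) := by
        intro i
        rw [Matrix.toLin'_apply, Matrix.mulVec, dotProduct, Finset.sum_eq_single (e i)]
        · simp [hM, he]
        · intro j _ hj
          have : (j : ℕ) ≠ i + n := fun h => hj (Fin.ext h)
          simp [hM, this]
        · simp
      simp only [t, Finset.mem_map, Finset.mem_univ, true_and, forall_exists_index,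
        forall_apply_eq_imp_iff]
      constructor
      · intro h i
        rw [← hNw, h, Pi.zero_apply]
      · intro h
        funext i
        by_cases hi : (i : ℕ) < n
        · exact (hNw ⟨i, hi⟩).trans (h _)
        · rw [Matrix.toLin'_apply, Matrix.mulVec, dotProduct]
          exact Finset.sum_eq_zero fun j _ => by simp [hM, hi]
  rw [hset, card_vanishing_not_vanishing hst, hs, ht, ZMod.card, Fintype.card_fin]
end
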